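/- Two bounded countable abelian groups G₊ and G₋ are weakly isomorphic if and only if m̄_{G₊} = m̄_{G₋}. -/

import Mathlib

/-- Two additive groups are weakly isomorphic if each is isomorphic to a subgroup
of the other. -/
def AddWeaklyIsomorphic (G H : Type*) [AddGroup G] [AddGroup H] : Prop :=
  (∃ K : AddSubgroup H, Nonempty (G ≃+ K)) ∧ (∃ K : AddSubgroup G, Nonempty (H ≃+ K))

/-!
For prime-power orders, `m̄ (pᵏ)` counts the summands whose order is divisible by `pᵏ`, and it
is the dimension over `𝔽_p` of `(pᵏ⁻¹G)[p]`. Embeddings preserve this subspace, so `m̄` is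
monotone under embeddings. Conversely, an inequality of the functions `m̄` is a Hall-type
condition which, for each prime separately, gives an injection of index sets along which orders
divide: the possible targets of a summand form a decreasing chain as its order grows, and a
suitable well-order of the summands lets a greedy choice succeed, whatever the cardinalities.
Cyclic groups whose orders divide embed, and so do their direct sums.
-/

section WellOrder

open Cardinal Function

universe u

variable {I J : Type u}

theorem exists_rank_injOn_fiber_and_mk_lt {κ : Type*} (f : I → κ) :
    ∃ rank : I → Ordinal.{u}, (∀ k, Set.InjOn rank (f ⁻¹' {k})) ∧
      ∀ i, #{i' | f i' = f i ∧ rank i' < rank i} < #{i' | f i' = f i} := by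
  choose s _ s_ord using fun k => exists_ord_eq {i // f i = k}
  let rank (i : I) : Ordinal := Ordinal.typein (s (f i)) ⟨i, rfl⟩
  have rank_eq : ∀ {k} i (hi : f i = k), rank i = Ordinal.typein (s k) ⟨i, hi⟩ := by
    rintro _ i rfl
    rfl
  refine ⟨rank, fun k i hi i' hi' hrank => ?_, fun i => ?_⟩
  · rw [rank_eq i hi, rank_eq i' hi'] at hrank
    exact congrArg Subtype.val (Ordinal.typein_injective _ hrank)
  · change #{i' // f i' = f i ∧ rank i' < rank i} < #{i' // f i' = f i}
    refine lt_of_le_of_lt ?_ (card_typein_lt ⟨i, rfl⟩ (s_ord (f i)))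
    rw [Ordinal.card_typein]
    refine mk_le_of_injective (f := fun i' => ⟨⟨i', i'.2.1⟩, ?_⟩) fun a b hab => ?_
    · simpa [rank_eq i' i'.2.1, rank] using i'.2.2
    · simpa [Subtype.ext_iff] using hab

/-- The well-order sorts by `c`, and within each fibre of `c` by a well-order of minimal type. -/
theorem exists_isWellOrder_mk_lt {c : I → Cardinal.{u}} (mk_lt : ∀ i, #{i' | c i' < c i} < c i)
    (mk_le : ∀ i, #{i' | c i' ≤ c i} ≤ c i) :
    ∃ r : I → I → Prop, IsWellOrder I r ∧ ∀ i, #{i' | r i' i} < c i := by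
  obtain ⟨rank, rank_inj, mk_rank_lt⟩ := exists_rank_injOn_fiber_and_mk_lt c
  let key : I ↪ Cardinal.{u} ×ₗ Ordinal.{u} :=
    ⟨fun i => toLex (c i, rank i), fun i i' hkey => by
      obtain ⟨hc, hrank⟩ := Prod.ext_iff.1 (toLex.injective hkey)
      exact rank_inj (c i') hc rfl hrank⟩
  have key_lt {i i'} : key i' < key i → c i' < c i ∨ c i' = c i ∧ rank i' < rank i :=
    Prod.Lex.toLex_lt_toLex.1
  refine ⟨Order.Preimage key (· < ·), (RelEmbedding.preimage key (· < ·)).isWellOrder, fun i => ?_⟩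
  change #{i' | key i' < key i} < c i
  obtain hfin | hinf := lt_or_ge (c i) ℵ₀
  · have le_finite : {i' | c i' ≤ c i}.Finite :=
      lt_aleph0_iff_set_finite.1 ((mk_le i).trans_lt hfin)
    have hsub : {i' | key i' < key i} ⊂ {i' | c i' ≤ c i} :=
      Set.ssubset_iff_exists.2 ⟨fun i' hi' => (key_lt hi').elim le_of_lt fun h => h.1.le,
        i, le_refl (c i), lt_irrefl (key i)⟩
    exact (mk_strictMonoOn (le_finite.subset hsub.subset) le_finite hsub).trans_le (mk_le i)
  · have hsub : {i' | key i' < key i} ⊆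
        {i' | c i' < c i} ∪ {i' | c i' = c i ∧ rank i' < rank i} := fun _ => key_lt
    have fiber_le : #{i' | c i' = c i} ≤ c i :=
      (mk_le_mk_of_subset fun _ => le_of_eq).trans (mk_le i)
    exact ((mk_le_mk_of_subset hsub).trans (mk_union_le _ _)).trans_lt
      (add_lt_of_lt hinf (mk_lt i) ((mk_rank_lt i).trans_le fiber_le))

variable {β : Type*} [LinearOrder β] [WellFoundedLT β]

theorem exists_mem_mk_le_mk_upper (h : I → β) {S : Set I} (hS : S.Nonempty) :
    ∃ i ∈ S, #S ≤ #{i' | h i ≤ h i'} := by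
  obtain ⟨i, hi, hmin⟩ := (InvImage.wf h wellFounded_lt).has_min S hS
  exact ⟨i, hi, mk_le_mk_of_subset fun i' hi' => not_lt.1 (hmin i' hi')⟩

theorem exists_isWellOrder_mk_lt_mk_upper (h : I → β) :
    ∃ r : I → I → Prop, IsWellOrder I r ∧ ∀ i, #{i' | r i' i} < #{i' | h i ≤ h i'} := by
  let c (i : I) : Cardinal := #{i' | h i ≤ h i'}
  refine exists_isWellOrder_mk_lt (c := c) (fun i => ?_) fun i => ?_
  · obtain hempty | hne := {i' | c i' < c i}.eq_empty_or_nonempty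
    · rw [hempty, mk_eq_zero]
      exact pos_iff_ne_zero.2 (mk_ne_zero_iff.2 ⟨⟨i, le_refl (h i)⟩⟩)
    · obtain ⟨i₀, hi₀, hle⟩ := exists_mem_mk_le_mk_upper h hne
      exact hle.trans_lt hi₀
  · obtain ⟨i₀, hi₀, hle⟩ :=
      exists_mem_mk_le_mk_upper h (S := {i' | c i' ≤ c i}) ⟨i, le_refl (c i)⟩
    exact hle.trans hi₀

theorem exists_injective_mem_of_mk_lt (r : I → I → Prop) [IsWellOrder I r] (T : I → Set J)
    (hT : ∀ i, #{i' | r i' i} < #(T i)) : ∃ σ : I → J, Injective σ ∧ ∀ i, σ i ∈ T i := by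
  have exists_new (i : I) (f : ∀ i', r i' i → J) : ∃ j ∈ T i, ∀ i' hi', f i' hi' ≠ j := by
    have hlt : #(Set.range fun i' : {i' // r i' i} => f i' i'.2) < #(T i) :=
      mk_range_le.trans_lt (hT i)
    obtain ⟨j, hj, hnew⟩ := Set.not_subset.1 fun hsub => hlt.not_ge (mk_le_mk_of_subset hsub)
    exact ⟨j, hj, fun i' hi' heq => hnew ⟨⟨i', hi'⟩, heq⟩⟩
  choose new new_mem new_ne using exists_new
  let σ : I → J := IsWellFounded.fix r new
  have σ_eq (i : I) : σ i = new i fun i' _ => σ i' := IsWellFounded.fix_eq r new i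
  have σ_ne {i i' : I} (hr : r i' i) : σ i' ≠ σ i := by
    rw [σ_eq i]
    exact new_ne i (fun i' _ => σ i') i' hr
  refine ⟨σ, fun i i' heq => ?_, fun i => ?_⟩
  · exact Std.Trichotomous.trichotomous (r := r) i i' (fun hr => σ_ne hr heq)
      fun hr => σ_ne hr heq.symm
  · rw [σ_eq]
    exact new_mem i _

theorem exists_injective_le_of_mk_upper_le {h : I → β} {g : J → β}
    (hle : ∀ i, #{i' | h i ≤ h i'} ≤ #{j | h i ≤ g j}) :
    ∃ σ : I → J, Injective σ ∧ ∀ i, h i ≤ g (σ i) := by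
  obtain ⟨r, _, mk_lt⟩ := exists_isWellOrder_mk_lt_mk_upper h
  exact exists_injective_mem_of_mk_lt r (fun i => {j | h i ≤ g j}) fun i =>
    (mk_lt i).trans_le (hle i)

end WellOrder

section DirectSum

open DirectSum Function

variable {I J : Type*} [DecidableEq I] [DecidableEq J] {A : I → Type*} {B : J → Type*}
  [∀ i, AddCommMonoid (A i)] [∀ j, AddCommMonoid (B j)]

/-- The map `⨁ i, A i → ⨁ j, B j` that sends the summand `A i` to the summand `B (σ i)` by `ψ i`:
a version of `DirectSum.map` that also changes the index type. -/
def directSumMapAlong (σ : I → J) (ψ : ∀ i, A i →+ B (σ i)) : (⨁ i, A i) →+ ⨁ j, B j :=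
  toAddMonoid fun i => (of B (σ i)).comp (ψ i)

variable {σ : I → J} {ψ : ∀ i, A i →+ B (σ i)}

theorem directSumMapAlong_of (i : I) (a : A i) :
    directSumMapAlong σ ψ (of A i a) = of B (σ i) (ψ i a) := by
  simp [directSumMapAlong]

theorem directSumMapAlong_apply (hσ : Injective σ) (x : ⨁ i, A i) (i : I) :
    directSumMapAlong σ ψ x (σ i) = ψ i (x i) := by
  induction x using DirectSum.induction_on with
  | zero => simp
  | of i' a =>
    rw [directSumMapAlong_of]
    obtain rfl | hne := eq_or_ne i i'
    · simp
    · rw [of_eq_of_ne _ _ _ hne, of_eq_of_ne _ _ _ (hσ.ne hne), map_zero]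
  | add x y hx hy => simp [hx, hy]

theorem directSumMapAlong_injective (hσ : Injective σ) (hψ : ∀ i, Injective (ψ i)) :
    Injective (directSumMapAlong σ ψ) := fun x y hxy => by
  ext i
  apply hψ i
  rw [← directSumMapAlong_apply hσ, hxy, directSumMapAlong_apply hσ]

theorem mem_range_directSumMapAlong {y : ⨁ j, B j} (hzero : ∀ j ∉ Set.range σ, y j = 0)
    (hrange : ∀ i, y (σ i) ∈ AddMonoidHom.mrange (ψ i)) :
    y ∈ AddMonoidHom.mrange (directSumMapAlong σ ψ) := by
  classical
  rw [← sum_support_of y]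
  refine sum_mem fun j _ => ?_
  by_cases hj : j ∈ Set.range σ
  · obtain ⟨i, rfl⟩ := hj
    obtain ⟨a, ha⟩ := hrange i
    exact ⟨of A i a, by rw [directSumMapAlong_of, ha]⟩
  · rw [hzero j hj, map_zero]
    exact zero_mem _

end DirectSum

section ZMod

open Function

theorem exists_eq_nsmul_of_nsmul_eq_zero {a c q : ℕ} (ha : a ≠ 0) (hq : a * c ∣ q) {x : ZMod q}
    (hx : a • x = 0) : ∃ y, c • y = x := by
  obtain ⟨t, rfl⟩ := ZMod.intCast_surjective x
  have q_dvd : (q : ℤ) ∣ a * t :=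
    (ZMod.intCast_zmod_eq_zero_iff_dvd (a * t) q).1 (by simpa using hx)
  have hdvd : (a * c : ℤ) ∣ a * t := (by exact_mod_cast hq : (a * c : ℤ) ∣ q).trans q_dvd
  obtain ⟨m, rfl⟩ := Int.dvd_of_mul_dvd_mul_left (by exact_mod_cast ha) hdvd
  exact ⟨m, by simp⟩

theorem exists_injective_zmod_range_eq_ker {a b : ℕ} (hb : b ≠ 0) (hab : a ∣ b) :
    ∃ ψ : ZMod a →+ ZMod b, Injective ψ ∧ ψ.range = (nsmulAddMonoidHom a).ker := by
  have : NeZero b := ⟨hb⟩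
  have card_ker : Nat.card (nsmulAddMonoidHom a : ZMod b →+ ZMod b).ker = a := by
    rw [IsAddCyclic.card_nsmulAddMonoidHom_ker, Nat.card_zmod, Nat.gcd_eq_right hab]
  let e : ZMod a ≃+ (nsmulAddMonoidHom a : ZMod b →+ ZMod b).ker :=
    (ZMod.ringEquivCongr card_ker.symm).toAddEquiv.trans (zmodAddCyclicAddEquiv inferInstance)
  refine ⟨(AddSubgroup.subtype _).comp e.toAddMonoidHom,
    (AddSubgroup.subtype_injective _).comp e.injective, ?_⟩
  rw [AddMonoidHom.range_comp, AddMonoidHom.range_eq_top.2 e.surjective,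
    ← AddMonoidHom.range_eq_map, AddSubgroup.range_subtype]

end ZMod

section HeightSocle

open Cardinal DirectSum Function

universe u

/-- The subgroup `(pᵏG)[p]`: the elements killed by `p` that are divisible by `pᵏ`. Its dimension
over `ZMod p` is the invariant `m̄_G (pᵏ⁺¹)`, the exponent being shifted to avoid `k - 1`. -/
def heightSocle (p k : ℕ) (G : Type*) [AddCommGroup G] : AddSubgroup G :=
  (nsmulAddMonoidHom p).ker ⊓ (nsmulAddMonoidHom (p ^ k)).range

variable {p k : ℕ}

instance {G : Type*} [AddCommGroup G] : Module (ZMod p) (heightSocle p k G) :=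
  AddCommGroup.zmodModule fun x => Subtype.ext x.2.1

theorem map_mem_heightSocle {G H : Type*} [AddCommGroup G] [AddCommGroup H] (f : G →+ H) {x : G}
    (hx : x ∈ heightSocle p k G) : f x ∈ heightSocle p k H := by
  obtain ⟨hx, y, rfl⟩ := hx
  exact ⟨by simpa using congrArg f hx, f y, by simp⟩

theorem rank_heightSocle_le_of_injective {G H : Type u} [AddCommGroup G] [AddCommGroup H]
    {f : G →+ H} (hf : Injective f) :
    Module.rank (ZMod p) (heightSocle p k G) ≤ Module.rank (ZMod p) (heightSocle p k H) := by
  let g : heightSocle p k G →+ heightSocle p k H :=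
    (f.comp (AddSubgroup.subtype _)).codRestrict _ fun x => map_mem_heightSocle f x.2
  have hg : Injective g := fun x y hxy => Subtype.ext (hf (congrArg Subtype.val hxy))
  exact LinearMap.rank_le_of_injective (g.toZModLinearMap p) hg

theorem heightSocle_zmod_of_dvd {q : ℕ} (hp : p ≠ 0) (hq : p ^ (k + 1) ∣ q) :
    heightSocle p k (ZMod q) = (nsmulAddMonoidHom p).ker := by
  refine inf_of_le_left fun x hx => ?_
  obtain ⟨y, rfl⟩ := exists_eq_nsmul_of_nsmul_eq_zero hp (pow_succ' p k ▸ hq) hx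
  exact ⟨y, rfl⟩

theorem heightSocle_zmod_of_not_dvd {q : ℕ} (hp : p.Prime) (hq : ¬ p ^ (k + 1) ∣ q) :
    heightSocle p k (ZMod q) = ⊥ := by
  refine (AddSubgroup.eq_bot_iff_forall _).2 ?_
  rintro _ ⟨hx, y, rfl⟩
  have order_dvd : addOrderOf y ∣ p ^ (k + 1) := by
    rw [addOrderOf_dvd_iff_nsmul_eq_zero, pow_succ, mul_nsmul]
    exact hx
  obtain ⟨j, hj, order_eq⟩ := (Nat.dvd_prime_pow hp).1 order_dvd
  have order_dvd_q : addOrderOf y ∣ q := addOrderOf_dvd_iff_nsmul_eq_zero.2 (by simp)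
  obtain rfl | hlt := hj.eq_or_lt
  · exact absurd (order_eq ▸ order_dvd_q) hq
  · exact addOrderOf_dvd_iff_nsmul_eq_zero.1
      (order_eq ▸ pow_dvd_pow p (Nat.le_of_lt_succ hlt))

theorem exists_injective_range_eq_heightSocle {I : Type*} {q : I → ℕ} (hq : ∀ i, q i ≠ 0)
    (hp : p.Prime) :
    ∃ φ : (⨁ _ : {i // p ^ (k + 1) ∣ q i}, ZMod p) →+ ⨁ i, ZMod (q i),
      Injective φ ∧ φ.range = heightSocle p k (⨁ i, ZMod (q i)) := by
  classical
  have exists_emb (i : {i // p ^ (k + 1) ∣ q i}) : ∃ ψ : ZMod p →+ ZMod (q i),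
      Injective ψ ∧ ψ.range = heightSocle p k (ZMod (q i)) := by
    rw [heightSocle_zmod_of_dvd hp.ne_zero i.2]
    exact exists_injective_zmod_range_eq_ker (hq i) ((dvd_pow_self p k.succ_ne_zero).trans i.2)
  choose ψ ψ_inj ψ_range using exists_emb
  refine ⟨directSumMapAlong (B := fun i => ZMod (q i)) Subtype.val ψ,
    directSumMapAlong_injective Subtype.val_injective ψ_inj, le_antisymm ?_ fun x hx => ?_⟩
  · rintro _ ⟨x, rfl⟩
    induction x using DirectSum.induction_on with
    | zero => simp
    | of i a =>
      rw [directSumMapAlong_of]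
      exact map_mem_heightSocle _ (ψ_range i ▸ ⟨a, rfl⟩)
    | add x y hx hy =>
      rw [map_add]
      exact add_mem hx hy
  · have coord_mem (i : I) : x i ∈ heightSocle p k (ZMod (q i)) :=
      map_mem_heightSocle (DFinsupp.evalAddMonoidHom i) hx
    refine mem_range_directSumMapAlong (fun i hi => ?_) fun i => (ψ_range i).ge (coord_mem i)
    have hndvd : ¬ p ^ (k + 1) ∣ q i := fun hdvd => hi ⟨⟨i, hdvd⟩, rfl⟩
    simpa [heightSocle_zmod_of_not_dvd hp hndvd] using coord_mem i

theorem rank_heightSocle_directSum_zmod {I : Type u} {q : I → ℕ} (hq : ∀ i, q i ≠ 0)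
    (hp : p.Prime) :
    Module.rank (ZMod p) (heightSocle p k (⨁ i, ZMod (q i))) = #{i // p ^ (k + 1) ∣ q i} := by
  have : Fact p.Prime := ⟨hp⟩
  obtain ⟨φ, φ_inj, φ_range⟩ := exists_injective_range_eq_heightSocle (k := k) hq hp
  let e : (⨁ _ : {i // p ^ (k + 1) ∣ q i}, ZMod p) ≃+ heightSocle p k (⨁ i, ZMod (q i)) :=
    (AddMonoidHom.ofInjective φ_inj).trans (AddEquiv.addSubgroupCongr φ_range)
  rw [← (LinearEquiv.ofBijective (e.toAddMonoidHom.toZModLinearMap p) e.bijective).rank_eq]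
  simp [rank_directSum]

end HeightSocle

section PrimePow

open Cardinal Function

universe u

theorem exists_le_eq_pow_iff_pow_dvd {q p k : ℕ} (hq : IsPrimePow q) (hp : p.Prime) (hk : k ≠ 0) :
    (∃ n, k ≤ n ∧ q = p ^ n) ↔ p ^ k ∣ q := by
  constructor
  · rintro ⟨n, hkn, rfl⟩
    exact pow_dvd_pow p hkn
  · obtain ⟨l, m, hl, -, rfl⟩ := (isPrimePow_nat_iff q).1 hq
    intro hdvd
    obtain rfl := Nat.prime_eq_prime_of_dvd_pow hp hl ((dvd_pow_self p hk).trans hdvd)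
    exact ⟨m, (Nat.pow_dvd_pow_iff_le_right hp.one_lt).1 hdvd, rfl⟩

theorem dvd_iff_minFac_eq_and_le {a b : ℕ} (ha : IsPrimePow a) (hb : IsPrimePow b) :
    a ∣ b ↔ b.minFac = a.minFac ∧ a ≤ b := by
  obtain ⟨p, n, hp, hn, rfl⟩ := (isPrimePow_nat_iff a).1 ha
  obtain ⟨l, m, hl, hm, rfl⟩ := (isPrimePow_nat_iff b).1 hb
  rw [hp.pow_minFac hn.ne', hl.pow_minFac hm.ne']
  constructor
  · intro hdvd
    exact ⟨(Nat.prime_eq_prime_of_dvd_pow hp hl ((dvd_pow_self p hn.ne').trans hdvd)).symm,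
      Nat.le_of_dvd hb.pos hdvd⟩
  · rintro ⟨rfl, hle⟩
    exact pow_dvd_pow l ((Nat.pow_le_pow_iff_right hp.one_lt).1 hle)

theorem mk_minFac_fiber_upper_eq {I : Type u} {q : I → ℕ} (hq : ∀ i, IsPrimePow (q i)) {a : ℕ}
    (ha : IsPrimePow a) :
    #{i : {i // (q i).minFac = a.minFac} | a ≤ q i} = #{i // a ∣ q i} :=
  mk_congr <| (Equiv.subtypeSubtypeEquivSubtypeInter _ fun i => a ≤ q i).trans <|
    Equiv.subtypeEquivRight fun i => (dvd_iff_minFac_eq_and_le ha (hq i)).symm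

theorem exists_injective_forall_dvd {I J : Type u} {q : I → ℕ} {r : J → ℕ}
    (hq : ∀ i, IsPrimePow (q i)) (hr : ∀ j, IsPrimePow (r j))
    (hle : ∀ a, IsPrimePow a → #{i // a ∣ q i} ≤ #{j // a ∣ r j}) :
    ∃ σ : I → J, Injective σ ∧ ∀ i, q i ∣ r (σ i) := by
  have matching (p : ℕ) : ∃ τ : {i // (q i).minFac = p} → {j // (r j).minFac = p},
      Injective τ ∧ ∀ i : {i // (q i).minFac = p}, q i ≤ r (τ i) := by
    refine exists_injective_le_of_mk_upper_le (h := fun i : {i // (q i).minFac = p} => q i)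
      (g := fun j : {j // (r j).minFac = p} => r j) ?_
    rintro ⟨i, rfl⟩
    rw [mk_minFac_fiber_upper_eq hq (hq i), mk_minFac_fiber_upper_eq hr (hq i)]
    exact hle (q i) (hq i)
  choose τ τ_inj le_τ using matching
  let σ : I → J := Equiv.sigmaFiberEquiv (fun j => (r j).minFac) ∘ Sigma.map id τ ∘
    (Equiv.sigmaFiberEquiv fun i => (q i).minFac).symm
  have σ_inj : Injective σ :=
    (Equiv.injective _).comp ((injective_id.sigma_map τ_inj).comp (Equiv.injective _))
  exact ⟨σ, σ_inj, fun i => (dvd_iff_minFac_eq_and_le (hq i) (hr (σ i))).2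
    ⟨(τ _ ⟨i, rfl⟩).2, le_τ _ ⟨i, rfl⟩⟩⟩

theorem forall_isPrimePow_iff {P : ℕ → Prop} :
    (∀ a, IsPrimePow a → P a) ↔ ∀ p k : ℕ, p.Prime → 1 ≤ k → P (p ^ k) := by
  simp only [isPrimePow_nat_iff, Nat.lt_iff_add_one_le]
  grind

end PrimePow

section Embedding

open Cardinal DirectSum Function

universe u

theorem exists_injective_directSum_zmod_of_dvd {I J : Type*} {q : I → ℕ} {r : J → ℕ}
    (hr : ∀ j, r j ≠ 0) {σ : I → J} (hσ : Injective σ) (hdvd : ∀ i, q i ∣ r (σ i)) :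
    ∃ f : (⨁ i, ZMod (q i)) →+ ⨁ j, ZMod (r j), Injective f := by
  classical
  choose ψ ψ_inj _ using fun i => exists_injective_zmod_range_eq_ker (hr (σ i)) (hdvd i)
  exact ⟨directSumMapAlong (B := fun j => ZMod (r j)) σ ψ, directSumMapAlong_injective hσ ψ_inj⟩

theorem exists_injective_directSum_zmod_iff {I J : Type u} {q : I → ℕ} {r : J → ℕ}
    (hq : ∀ i, IsPrimePow (q i)) (hr : ∀ j, IsPrimePow (r j)) :
    (∃ f : (⨁ i, ZMod (q i)) →+ ⨁ j, ZMod (r j), Injective f) ↔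
      ∀ a, IsPrimePow a → #{i // a ∣ q i} ≤ #{j // a ∣ r j} := by
  constructor
  · rintro ⟨f, hf⟩ a ha
    obtain ⟨p, k, hp, rfl⟩ := (isPrimePow_iff_pow_succ a).1 ha
    rw [← rank_heightSocle_directSum_zmod (fun i => (hq i).ne_zero) hp.nat_prime,
      ← rank_heightSocle_directSum_zmod (fun j => (hr j).ne_zero) hp.nat_prime]
    exact rank_heightSocle_le_of_injective hf
  · intro hle
    obtain ⟨σ, hσ, hdvd⟩ := exists_injective_forall_dvd hq hr hle
    exact exists_injective_directSum_zmod_of_dvd (fun j => (hr j).ne_zero) hσ hdvd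

theorem exists_injective_addMonoidHom_congr {G G' H H' : Type*} [AddZeroClass G] [AddZeroClass G']
    [AddZeroClass H] [AddZeroClass H'] (e : G ≃+ G') (e' : H ≃+ H') :
    (∃ f : G →+ H, Injective f) ↔ ∃ f : G' →+ H', Injective f := by
  constructor
  · rintro ⟨f, hf⟩
    exact ⟨(e'.toAddMonoidHom.comp f).comp e.symm.toAddMonoidHom,
      (e'.injective.comp hf).comp e.symm.injective⟩
  · rintro ⟨f, hf⟩
    exact ⟨(e'.symm.toAddMonoidHom.comp f).comp e.toAddMonoidHom,
      (e'.symm.injective.comp hf).comp e.injective⟩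

theorem exists_addSubgroup_addEquiv_iff {G H : Type*} [AddGroup G] [AddGroup H] :
    (∃ K : AddSubgroup H, Nonempty (G ≃+ K)) ↔ ∃ f : G →+ H, Injective f := by
  constructor
  · rintro ⟨K, ⟨e⟩⟩
    exact ⟨K.subtype.comp e.toAddMonoidHom, K.subtype_injective.comp e.injective⟩
  · rintro ⟨f, hf⟩
    exact ⟨f.range, ⟨AddMonoidHom.ofInjective hf⟩⟩

end Embedding

theorem bounded_countable_abelian_weaklyIso_iff_mbar_eq_general.{u}
    {Gp Gm : Type*} [AddCommGroup Gp] [AddCommGroup Gm] {Ip Im : Type u} {qp : Ip → ℕ} {qm : Im → ℕ}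
    (hqp : ∀ i, IsPrimePow (qp i)) (hqm : ∀ i, IsPrimePow (qm i))
    (ep : Gp ≃+ DirectSum Ip fun i => ZMod (qp i))
    (em : Gm ≃+ DirectSum Im fun i => ZMod (qm i)) :
    AddWeaklyIsomorphic Gp Gm ↔
      ∀ p k : ℕ, p.Prime → 1 ≤ k →
        Cardinal.mk {i : Ip // ∃ n, k ≤ n ∧ qp i = p ^ n} =
          Cardinal.mk {i : Im // ∃ n, k ≤ n ∧ qm i = p ^ n} := by
  have iff_mk_dvd_eq : AddWeaklyIsomorphic Gp Gm ↔ ∀ a, IsPrimePow a →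
      Cardinal.mk {i // a ∣ qp i} = Cardinal.mk {i // a ∣ qm i} := by
    simp only [AddWeaklyIsomorphic, exists_addSubgroup_addEquiv_iff,
      exists_injective_addMonoidHom_congr ep em, exists_injective_addMonoidHom_congr em ep,
      exists_injective_directSum_zmod_iff hqp hqm, exists_injective_directSum_zmod_iff hqm hqp,
      le_antisymm_iff, forall_and]
  rw [iff_mk_dvd_eq, forall_isPrimePow_iff]
  refine forall₄_congr fun p k hp hk => ?_
  simp only [exists_le_eq_pow_iff_pow_dvd (hqp _) hp (Nat.one_le_iff_ne_zero.1 hk),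
    exists_le_eq_pow_iff_pow_dvd (hqm _) hp (Nat.one_le_iff_ne_zero.1 hk)]

theorem bounded_countable_abelian_weaklyIso_iff_mbar_eq
    (Gp Gm : Type*) [AddCommGroup Gp] [AddCommGroup Gm]
    (Ip Im : Type) [Countable Ip] [Countable Im]
    (qp : Ip → ℕ) (qm : Im → ℕ)
    (hqp : ∀ i, IsPrimePow (qp i)) (hqm : ∀ i, IsPrimePow (qm i))
    (hbp : ∃ N, ∀ i, qp i ≤ N) (hbm : ∃ N, ∀ i, qm i ≤ N)
    (ep : Gp ≃+ DirectSum Ip fun i => ZMod (qp i))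
    (em : Gm ≃+ DirectSum Im fun i => ZMod (qm i)) :
    AddWeaklyIsomorphic Gp Gm ↔
      ∀ p k : ℕ, p.Prime → 1 ≤ k →
        Cardinal.mk {i : Ip // ∃ n, k ≤ n ∧ qp i = p ^ n} =
          Cardinal.mk {i : Im // ∃ n, k ≤ n ∧ qm i = p ^ n} :=
  bounded_countable_abelian_weaklyIso_iff_mbar_eq_general hqp hqm ep em
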